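/- For any graphs G and H, γ(G □ H) ≥ (1/2)·γ(G)·γ(H) + (1/2)·min{γ(G), γ(H)}. -/

import Mathlib

open SimpleGraph

/-- `S` is a dominating set of `G`. -/
def IsDomSet {V : Type*} (G : SimpleGraph V) (S : Set V) : Prop :=
  ∀ v : V, v ∈ S ∨ ∃ u ∈ S, G.Adj u v

/-- The domination number of a finite graph. -/
noncomputable def domNum {V : Type*} [Fintype V] (G : SimpleGraph V) : ℕ :=
  sInf {n | ∃ S : Finset V, IsDomSet G ↑S ∧ S.card = n}

/-- `Γ` is a minimum dominating set of `G`. -/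
def IsMinDomSet {V : Type*} [Fintype V] (G : SimpleGraph V) (Γ : Finset V) : Prop :=
  IsDomSet G ↑Γ ∧ Γ.card = domNum G

/-- `G` is a cograph: it has no induced `P₄`. -/
def IsCograph {V : Type*} (G : SimpleGraph V) : Prop :=
  ¬ ∃ f : Fin 4 ↪ V, ∀ a b : Fin 4, (pathGraph 4).Adj a b ↔ G.Adj (f a) (f b)

/-- `w` is a private neighbor of `v` with respect to `Γ`. -/
def PrivNbr {V : Type*} (G : SimpleGraph V) (Γ : Set V) (v w : V) : Prop :=
  w ∉ Γ ∧ G.Adj v w ∧ ∀ u ∈ Γ, G.Adj u w → u = v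

/-- `w` is a shared neighbor of exactly `v₁` and `v₂` within `Γ`. -/
def SharedNbr {V : Type*} (G : SimpleGraph V) (Γ : Set V) (v₁ v₂ w : V) : Prop :=
  w ∉ Γ ∧ ∀ u ∈ Γ, G.Adj u w ↔ (u = v₁ ∨ u = v₂)

theorem domNum_le_card {V : Type*} [Fintype V] (G : SimpleGraph V) (S : Finset V)
    (h : IsDomSet G ↑S) : domNum G ≤ S.card :=
  Nat.sInf_le ⟨S, h, rfl⟩

theorem exists_minDomSet {V : Type*} [Fintype V] (G : SimpleGraph V) :
    ∃ S : Finset V, IsDomSet G ↑S ∧ S.card = domNum G := by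
  have hne : {n | ∃ S : Finset V, IsDomSet G ↑S ∧ S.card = n}.Nonempty :=
    ⟨_, Finset.univ, fun v => Or.inl (by simp), rfl⟩
  exact Nat.sInf_mem hne

/-- The stronger one-sided bound `2 γ(G □ H) ≥ γ(G) γ(H) + γ(G)` for nonempty `H`.
Take a smallest dominating set `U` of `G` among subsets of the projection of a minimum dominating
set `D` of the product, and double count the horizontally dominated cells. -/
theorem one_sided_bound {V W : Type*} [Fintype V] [Fintype W] [Nonempty W]
    (G : SimpleGraph V) (H : SimpleGraph W) :
    domNum G * domNum H + domNum G ≤ 2 * domNum (G.boxProd H) := by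
  classical
  obtain ⟨D, hD, hDc⟩ := exists_minDomSet (G.boxProd H)
  have hproj : IsDomSet G ↑(D.image Prod.fst) := by
    intro g
    obtain ⟨w⟩ := ‹Nonempty W›
    rcases hD (g, w) with h | ⟨⟨a, b⟩, h, hadj⟩
    · left
      exact Finset.mem_coe.2 (Finset.mem_image.2 ⟨_, h, rfl⟩)
    · rw [SimpleGraph.boxProd_adj] at hadj
      rcases hadj with ⟨h1, h2⟩ | ⟨h1, h2⟩
      · right
        exact ⟨a, Finset.mem_coe.2 (Finset.mem_image.2 ⟨_, h, rfl⟩), h1⟩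
      · left
        exact Finset.mem_coe.2 (Finset.mem_image.2 ⟨_, h, h2⟩)
  obtain ⟨U, hU, hUmin⟩ := Finset.exists_min_image
    ((D.image Prod.fst).powerset.filter (fun S : Finset V => IsDomSet G (S : Set V))) Finset.card
    ⟨D.image Prod.fst, Finset.mem_filter.2 ⟨Finset.mem_powerset_self _, hproj⟩⟩
  rw [Finset.mem_filter, Finset.mem_powerset] at hU
  obtain ⟨hUsub, hUdom⟩ := hU
  have hf : ∀ g, ∃ u ∈ U, (u = g ∨ G.Adj u g) ∧ (g ∈ U → u = g) := by
    intro g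
    by_cases hg : g ∈ U
    · exact ⟨g, hg, Or.inl rfl, fun _ => rfl⟩
    · rcases hUdom g with h | ⟨u, hu, hadj⟩
      · exact absurd h hg
      · exact ⟨u, hu, Or.inr hadj, fun h => absurd h hg⟩
  choose f hfU hfadj hfid using hf
  let Q : W → Finset V := fun v => (D.filter (fun p => p.2 = v)).image Prod.fst
  let P : V → Finset W := fun i => (D.filter (fun p => f p.1 = i)).image Prod.snd
  have hQ : ∀ g v, g ∈ Q v ↔ (g, v) ∈ D := by
    intro g v
    simp [Q]
  have hP : ∀ g v, (g, v) ∈ D → v ∈ P (f g) := by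
    intro g v h
    simp only [P, Finset.mem_image, Finset.mem_filter]
    exact ⟨(g, v), ⟨h, rfl⟩, rfl⟩
  let R : V → W → Prop := fun i v => ∀ g, f g = i → g ∈ Q v ∨ ∃ u ∈ Q v, G.Adj u g
  have hrow : ∀ v, (U.filter (fun i => R i v)).card ≤ (D.filter (fun p => p.2 = v)).card := by
    intro v
    have hdom : IsDomSet G ↑(Q v ∪ U.filter (fun i => ¬ R i v)) := by
      intro g
      by_cases hR : R (f g) v
      · rcases hR g rfl with h | ⟨u, hu, hadj⟩
        · left; simp [h]
        · right; exact ⟨u, by simp [hu], hadj⟩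
      · have hm : f g ∈ (↑(Q v ∪ U.filter (fun i => ¬ R i v)) : Set V) := by
          simp [hR, hfU g]
        rcases hfadj g with h | h
        · left; rw [h] at hm; exact hm
        · right; exact ⟨f g, hm, h⟩
    have h1 := hUmin (Q v ∪ U.filter (fun i => ¬ R i v)) (by
      rw [Finset.mem_filter, Finset.mem_powerset]
      refine ⟨Finset.union_subset ?_ ((Finset.filter_subset _ _).trans hUsub), hdom⟩
      exact Finset.image_subset_image (Finset.filter_subset _ _))
    have h2 := Finset.card_union_le (Q v) (U.filter (fun i => ¬ R i v))
    have h3 : (Q v).card ≤ (D.filter (fun p => p.2 = v)).card := Finset.card_image_le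
    have h4 := Finset.card_filter_add_card_filter_not (s := U) (fun i => R i v)
    omega
  have hcol : ∀ i ∈ U, domNum H + 1 ≤
      (D.filter (fun p => f p.1 = i)).card + (Finset.univ.filter (fun v => R i v)).card := by
    intro i hi
    obtain ⟨⟨j, w⟩, hw, hj⟩ := Finset.mem_image.1 (hUsub hi)
    dsimp only at hj
    subst hj
    have hwP : w ∈ P j := by
      have := hP _ _ hw
      rwa [hfid _ hi] at this
    have hwR : R j w := by
      intro g hg
      rcases hfadj g with h | h
      · left; rw [hQ, ← h, hg]; exact hw
      · right; exact ⟨j, (hQ _ _).2 hw, hg ▸ h⟩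
    have hdom : IsDomSet H ↑(P j ∪ (Finset.univ.filter (fun v => R j v)).erase w) := by
      intro v
      by_cases hv : v ∈ P j ∨ ∃ x ∈ P j, H.Adj x v
      · rcases hv with h | ⟨x, hx, hadj⟩
        · left; simp [h]
        · right; exact ⟨x, by simp [hx], hadj⟩
      · left
        have hne : v ≠ w := fun h => hv (Or.inl (h ▸ hwP))
        have hR : R j v := by
          intro g hg
          rcases hD (g, v) with h | ⟨⟨a, b⟩, h, hadj⟩
          · left; exact (hQ _ _).2 h
          · rw [SimpleGraph.boxProd_adj] at hadj
            rcases hadj with ⟨h1, h2⟩ | ⟨h1, h2⟩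
            · right
              dsimp only at h1 h2
              subst h2
              exact ⟨a, (hQ _ _).2 h, h1⟩
            · exfalso
              dsimp only at h1 h2
              subst h2
              exact hv (Or.inr ⟨b, hg ▸ hP _ _ h, h1⟩)
        simp [hne, hR]
    have h1 := domNum_le_card H _ hdom
    have h2 := Finset.card_union_le (P j) ((Finset.univ.filter (fun v => R j v)).erase w)
    have h3 : (P j).card ≤ (D.filter (fun p => f p.1 = j)).card := Finset.card_image_le
    have h4 := Finset.card_erase_add_one
      (show w ∈ Finset.univ.filter (fun v => R j v) by simp [hwR])
    omega
  have hs1 : ∑ i ∈ U, (D.filter (fun p => f p.1 = i)).card = D.card :=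
    (Finset.card_eq_sum_card_fiberwise (fun p _ => hfU p.1)).symm
  have hs2 : ∑ v : W, (D.filter (fun p => p.2 = v)).card = D.card :=
    (Finset.card_eq_sum_card_fiberwise (fun p _ => Finset.mem_coe.2 (Finset.mem_univ p.2))).symm
  have hs3 : ∑ i ∈ U, (Finset.univ.filter (fun v => R i v)).card
      = ∑ v : W, (U.filter (fun i => R i v)).card := by
    simp only [Finset.card_filter]
    exact Finset.sum_comm
  have h1 := Finset.sum_le_sum hcol
  rw [Finset.sum_const, smul_eq_mul, Finset.sum_add_distrib, hs1, hs3] at h1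
  have h2 := Finset.sum_le_sum (fun v (_ : v ∈ (Finset.univ : Finset W)) => hrow v)
  rw [hs2] at h2
  have h3 := Nat.mul_le_mul_right (domNum H + 1) (domNum_le_card G U hUdom)
  rw [← hDc]
  linarith

theorem suen_tarr_bound {V W : Type*} [Fintype V] [Fintype W]
    (G : SimpleGraph V) (H : SimpleGraph W) :
    2 * domNum (G.boxProd H) ≥ domNum G * domNum H + min (domNum G) (domNum H) := by
  rcases isEmpty_or_nonempty W with hW | hW
  · have h0 : domNum H = 0 := by
      have := domNum_le_card H ∅ (fun v => hW.elim v)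
      simpa using this
    simp [h0]
  · have h := one_sided_bound G H
    have h2 := min_le_left (domNum G) (domNum H)
    omega
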